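/- arXiv:2506.20395 — 3 statements merged into one kernel-verified Lean document; each statement's English description precedes it below -/
import Mathlib

section
/- Let K be a field of characteristic 0, A a finite-dimensional ℤ₂-graded associative unital K-algebra, B a ℤ₂-graded associative unital K-algebra, and (Ξ, ρ) an A-universal supermap for B. Then for every supercommutative K-algebra F, the map sending a graded K-algebra homomorphism ζ: Ξ → F to the graded homomorphism (id_A⊗ζ)∘ρ: B → A⊗F is a bijection between the set of graded K-algebra homomorphisms from Ξ to F and the set of graded K-algebra homomorphisms from B to A⊗F. -/
open TensorProduct

universe u

section SuperDefs

variable (K : Type u) [Field K]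

/-- A ℤ₂-decomposition of a `K`-module. -/
def IsZ2Decomp {A : Type*} [AddCommGroup A] [Module K A]
    (𝒜 : ZMod 2 → Submodule K A) : Prop :=
  𝒜 0 ⊔ 𝒜 1 = ⊤ ∧ 𝒜 0 ⊓ 𝒜 1 = ⊥

/-- A ℤ₂-grading on a `K`-algebra. -/
def IsZ2Grading {A : Type*} [Ring A] [Algebra K A]
    (𝒜 : ZMod 2 → Submodule K A) : Prop :=
  IsZ2Decomp K 𝒜 ∧ (1 : A) ∈ 𝒜 0 ∧
    ∀ i j : ZMod 2, ∀ a ∈ 𝒜 i, ∀ b ∈ 𝒜 j, a * b ∈ 𝒜 (i + j)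

/-- Homogeneous elements supercommute. -/
def IsSupercommutative {A : Type*} [Ring A] [Algebra K A]
    (𝒜 : ZMod 2 → Submodule K A) : Prop :=
  ∀ i j : ZMod 2, ∀ a ∈ 𝒜 i, ∀ b ∈ 𝒜 j,
    a * b = (-1 : K) ^ (i.val * j.val) • (b * a)

/-- The super (ℤ₂-) grading on a tensor product. -/
def superTensorGrading {A Ξ : Type*} [AddCommGroup A] [Module K A]
    [AddCommGroup Ξ] [Module K Ξ]
    (𝒜 : ZMod 2 → Submodule K A) (𝒳 : ZMod 2 → Submodule K Ξ)
    (k : ZMod 2) : Submodule K (A ⊗[K] Ξ) :=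
  LinearMap.range (TensorProduct.map (𝒜 0).subtype (𝒳 k).subtype) ⊔
    LinearMap.range (TensorProduct.map (𝒜 1).subtype (𝒳 (k + 1)).subtype)

/-- A graded homomorphism of ℤ₂-graded algebras. -/
def IsGradedHom {B C : Type*} [Ring B] [Algebra K B] [Ring C] [Algebra K C]
    (ℬ : ZMod 2 → Submodule K B) (𝒞 : ZMod 2 → Submodule K C)
    (f : B →ₐ[K] C) : Prop :=
  ∀ k : ZMod 2, ∀ b ∈ ℬ k, f b ∈ 𝒞 k

/-- A graded (homogeneous) subspace. -/
def IsGradedSubmodule {A : Type*} [AddCommGroup A] [Module K A]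
    (𝒜 : ZMod 2 → Submodule K A) (W : Submodule K A) : Prop :=
  W = (W ⊓ 𝒜 0) ⊔ (W ⊓ 𝒜 1)

/-- A graded (homogeneous) subalgebra. -/
def IsGradedSubalgebra {A : Type*} [Ring A] [Algebra K A]
    (𝒜 : ZMod 2 → Submodule K A) (S : Subalgebra K A) : Prop :=
  IsGradedSubmodule K 𝒜 (Subalgebra.toSubmodule S)

/-- A `K`-subspace which is a two-sided ideal. -/
def IsTwoSidedSubmodule {A : Type*} [Ring A] [Algebra K A]
    (I : Submodule K A) : Prop :=
  ∀ a : A, ∀ x ∈ I, a * x ∈ I ∧ x * a ∈ I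

/-- Graded-simplicity: no nonzero proper graded two-sided ideals. -/
def IsGradedSimple {A : Type*} [Ring A] [Algebra K A]
    (𝒜 : ZMod 2 → Submodule K A) : Prop :=
  ∀ I : Submodule K A, IsTwoSidedSubmodule K I → IsGradedSubmodule K 𝒜 I →
    I = ⊥ ∨ I = ⊤

/-- A supercommutative `K`-algebra (algebra of superscalars). -/
structure SuperAlg : Type (u + 1) where
  carrier : Type u
  [ring : Ring carrier]
  [alg : Algebra K carrier]
  grading : ZMod 2 → Submodule K carrier
  isGrading : IsZ2Grading K grading
  isSupercomm : IsSupercommutative K grading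

attribute [instance] SuperAlg.ring SuperAlg.alg

/-- `ρ(B) ⊆ A ⊗ S` for a subalgebra `S` of `Ξ`. -/
def MapsIntoTensorSub {A B Ξ : Type u} [Ring A] [Algebra K A] [Ring B] [Algebra K B]
    [Ring Ξ] [Algebra K Ξ] (ρ : B →ₐ[K] A ⊗[K] Ξ) (S : Subalgebra K Ξ) : Prop :=
  ∀ b : B, ρ b ∈ LinearMap.range
    (TensorProduct.map (LinearMap.id : A →ₗ[K] A) (Subalgebra.toSubmodule S).subtype)

/-- `(Ξ, ρ)` is an `A`-universal supermap for `B`. -/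
def IsUniversalSupermap {A : Type u} [Ring A] [Algebra K A]
    (𝒜 : ZMod 2 → Submodule K A)
    {B : Type u} [Ring B] [Algebra K B] (ℬ : ZMod 2 → Submodule K B)
    (Ξ : SuperAlg K) (ρ : B →ₐ[K] A ⊗[K] Ξ.carrier) : Prop :=
  IsGradedHom K ℬ (superTensorGrading K 𝒜 Ξ.grading) ρ ∧
  (∀ S : Subalgebra K Ξ.carrier, IsGradedSubalgebra K Ξ.grading S →
      MapsIntoTensorSub K ρ S → S = ⊤) ∧
  ∀ (F : SuperAlg K) (κ : B →ₐ[K] A ⊗[K] F.carrier),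
    IsGradedHom K ℬ (superTensorGrading K 𝒜 F.grading) κ →
    ∃ ζ : Ξ.carrier →ₐ[K] F.carrier, IsGradedHom K Ξ.grading F.grading ζ ∧
      (Algebra.TensorProduct.map (AlgHom.id K A) ζ).comp ρ = κ

end SuperDefs

/-!
Surjectivity is the universal property, and the map lands in graded homomorphisms because `id_A ⊗ ζ`
is graded. For injectivity, let `ζ₁`, `ζ₂` be graded with `(id_A ⊗ ζ₁) ∘ ρ = (id_A ⊗ ζ₂) ∘ ρ`. Their
equalizer `S` is a graded subalgebra of `Ξ`, and since `A` is flat over `K`, the equalizer of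
`id_A ⊗ ζ₁` and `id_A ⊗ ζ₂` is `A ⊗ S`. Hence `ρ(B) ⊆ A ⊗ S`, and minimality of `Ξ` forces `S = Ξ`.
-/

section SuperModules

variable {K : Type u} [Field K]
  {M M' N N' : Type*} [AddCommGroup M] [Module K M] [AddCommGroup M'] [Module K M']
  [AddCommGroup N] [Module K N] [AddCommGroup N'] [Module K N']

theorem map_superTensorGrading_le {𝒜 : ZMod 2 → Submodule K M} {𝒜' : ZMod 2 → Submodule K M'}
    {𝒳 : ZMod 2 → Submodule K N} {𝒳' : ZMod 2 → Submodule K N'} {f : M →ₗ[K] M'} {g : N →ₗ[K] N'}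
    (hf : ∀ i, (𝒜 i).map f ≤ 𝒜' i) (hg : ∀ i, (𝒳 i).map g ≤ 𝒳' i) (k : ZMod 2) :
    (superTensorGrading K 𝒜 𝒳 k).map (TensorProduct.map f g) ≤
      superTensorGrading K 𝒜' 𝒳' k := by
  have map_range_le (i j : ZMod 2) :
      (LinearMap.range (TensorProduct.map (𝒜 i).subtype (𝒳 j).subtype)).map
          (TensorProduct.map f g) ≤
        LinearMap.range (TensorProduct.map (𝒜' i).subtype (𝒳' j).subtype) := by
    rw [← LinearMap.range_comp, ← TensorProduct.map_comp]
    apply TensorProduct.range_map_mono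
    · simpa only [LinearMap.range_comp, Submodule.range_subtype] using hf i
    · simpa only [LinearMap.range_comp, Submodule.range_subtype] using hg j
  rw [superTensorGrading, Submodule.map_sup]
  exact sup_le_sup (map_range_le 0 k) (map_range_le 1 (k + 1))

theorem isGradedSubmodule_eqLocus {ℳ : ZMod 2 → Submodule K M} {𝒩 : ZMod 2 → Submodule K N}
    {f g : M →ₗ[K] N} (hℳ : Codisjoint (ℳ 0) (ℳ 1)) (h𝒩 : Disjoint (𝒩 0) (𝒩 1))
    (hf : ∀ i, (ℳ i).map f ≤ 𝒩 i) (hg : ∀ i, (ℳ i).map g ≤ 𝒩 i) :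
    IsGradedSubmodule K ℳ (LinearMap.eqLocus f g) := by
  have sub_mem_grading {i : ZMod 2} {x : M} (hx : x ∈ ℳ i) : f x - g x ∈ 𝒩 i :=
    sub_mem (hf i (Submodule.mem_map_of_mem hx)) (hg i (Submodule.mem_map_of_mem hx))
  refine le_antisymm (fun x hx ↦ ?_) (sup_le inf_le_left inf_le_left)
  obtain ⟨y, z, hy, hz, rfl⟩ := Submodule.codisjoint_iff_exists_add_eq.mp hℳ x
  have sub_add_sub_eq_zero : (f y - g y) + (f z - g z) = 0 := by
    rw [sub_add_sub_comm, ← map_add, ← map_add, sub_eq_zero]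
    exact hx
  obtain ⟨hy_sub, hz_sub⟩ := Submodule.disjoint_iff_add_eq_zero.mp h𝒩
    (sub_mem_grading hy) (sub_mem_grading hz) sub_add_sub_eq_zero
  exact Submodule.add_mem_sup ⟨sub_eq_zero.mp hy_sub, hy⟩ ⟨sub_eq_zero.mp hz_sub, hz⟩

end SuperModules

section SuperAlgebras

variable {K : Type u} [Field K]

theorem IsGradedHom.map_le {B C : Type*} [Ring B] [Algebra K B] [Ring C] [Algebra K C]
    {ℬ : ZMod 2 → Submodule K B} {𝒞 : ZMod 2 → Submodule K C} {f : B →ₐ[K] C}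
    (hf : IsGradedHom K ℬ 𝒞 f) (k : ZMod 2) : (ℬ k).map f.toLinearMap ≤ 𝒞 k :=
  Submodule.map_le_iff_le_comap.mpr (hf k)

theorem IsGradedHom.comp {B C D : Type*} [Ring B] [Algebra K B] [Ring C] [Algebra K C]
    [Ring D] [Algebra K D] {ℬ : ZMod 2 → Submodule K B} {𝒞 : ZMod 2 → Submodule K C}
    {𝒟 : ZMod 2 → Submodule K D} {g : C →ₐ[K] D} {f : B →ₐ[K] C}
    (hg : IsGradedHom K 𝒞 𝒟 g) (hf : IsGradedHom K ℬ 𝒞 f) : IsGradedHom K ℬ 𝒟 (g.comp f) :=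
  fun k b hb ↦ hg k (f b) (hf k b hb)

theorem IsGradedHom.id {A : Type*} [Ring A] [Algebra K A] (𝒜 : ZMod 2 → Submodule K A) :
    IsGradedHom K 𝒜 𝒜 (AlgHom.id K A) :=
  fun _ _ ha ↦ ha

theorem IsGradedHom.tensorMap {A A' X X' : Type*} [Ring A] [Algebra K A] [Ring A'] [Algebra K A']
    [Ring X] [Algebra K X] [Ring X'] [Algebra K X']
    {𝒜 : ZMod 2 → Submodule K A} {𝒜' : ZMod 2 → Submodule K A'}
    {𝒳 : ZMod 2 → Submodule K X} {𝒳' : ZMod 2 → Submodule K X'} {f : A →ₐ[K] A'} {g : X →ₐ[K] X'}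
    (hf : IsGradedHom K 𝒜 𝒜' f) (hg : IsGradedHom K 𝒳 𝒳' g) :
    IsGradedHom K (superTensorGrading K 𝒜 𝒳) (superTensorGrading K 𝒜' 𝒳')
      (Algebra.TensorProduct.map f g) :=
  fun k _ ht ↦ map_superTensorGrading_le hf.map_le hg.map_le k (Submodule.mem_map_of_mem ht)

theorem IsGradedHom.isGradedSubalgebra_equalizer {X C : Type*} [Ring X] [Algebra K X]
    [Ring C] [Algebra K C] {𝒳 : ZMod 2 → Submodule K X} {𝒞 : ZMod 2 → Submodule K C}
    (h𝒳 : Codisjoint (𝒳 0) (𝒳 1)) (h𝒞 : Disjoint (𝒞 0) (𝒞 1)) {ζ₁ ζ₂ : X →ₐ[K] C}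
    (h₁ : IsGradedHom K 𝒳 𝒞 ζ₁) (h₂ : IsGradedHom K 𝒳 𝒞 ζ₂) :
    IsGradedSubalgebra K 𝒳 (AlgHom.equalizer ζ₁ ζ₂) :=
  isGradedSubmodule_eqLocus h𝒳 h𝒞 h₁.map_le h₂.map_le

theorem mapsIntoTensorSub_equalizer_iff {A B X : Type u} {C : Type*} [Ring A] [Algebra K A]
    [Ring B] [Algebra K B] [Ring X] [Algebra K X] [Ring C] [Algebra K C]
    (ρ : B →ₐ[K] A ⊗[K] X) (ζ₁ ζ₂ : X →ₐ[K] C) :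
    MapsIntoTensorSub K ρ (AlgHom.equalizer ζ₁ ζ₂) ↔
      (Algebra.TensorProduct.map (AlgHom.id K A) ζ₁).comp ρ =
        (Algebra.TensorProduct.map (AlgHom.id K A) ζ₂).comp ρ := by
  have range_eq_eqLocus :
      LinearMap.range (TensorProduct.map (LinearMap.id : A →ₗ[K] A)
          (Subalgebra.toSubmodule (AlgHom.equalizer ζ₁ ζ₂)).subtype) =
        LinearMap.eqLocus (ζ₁.toLinearMap.lTensor A) (ζ₂.toLinearMap.lTensor A) :=
    (Module.Flat.eqLocus_lTensor_eq K A ζ₁.toLinearMap ζ₂.toLinearMap).symm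
  rw [MapsIntoTensorSub, range_eq_eqLocus, AlgHom.ext_iff]
  rfl

theorem IsGradedHom.eq_of_tensorMap_comp_eq {A B X : Type u} {C : Type*} [Ring A] [Algebra K A]
    [Ring B] [Algebra K B] [Ring X] [Algebra K X] [Ring C] [Algebra K C]
    {𝒳 : ZMod 2 → Submodule K X} {𝒞 : ZMod 2 → Submodule K C}
    (h𝒳 : Codisjoint (𝒳 0) (𝒳 1)) (h𝒞 : Disjoint (𝒞 0) (𝒞 1)) {ρ : B →ₐ[K] A ⊗[K] X}
    (hmin : ∀ S : Subalgebra K X, IsGradedSubalgebra K 𝒳 S → MapsIntoTensorSub K ρ S → S = ⊤)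
    {ζ₁ ζ₂ : X →ₐ[K] C} (h₁ : IsGradedHom K 𝒳 𝒞 ζ₁) (h₂ : IsGradedHom K 𝒳 𝒞 ζ₂)
    (h : (Algebra.TensorProduct.map (AlgHom.id K A) ζ₁).comp ρ =
      (Algebra.TensorProduct.map (AlgHom.id K A) ζ₂).comp ρ) :
    ζ₁ = ζ₂ :=
  AlgHom.equalizer_eq_top.mp <|
    hmin _ (h₁.isGradedSubalgebra_equalizer h𝒳 h𝒞 h₂)
      ((mapsIntoTensorSub_equalizer_iff ρ ζ₁ ζ₂).mpr h)

end SuperAlgebras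

theorem universal_supermap_bijection_general
    {K : Type u} [Field K]
    {A : Type u} [Ring A] [Algebra K A]
    (𝒜 : ZMod 2 → Submodule K A) (h𝒜 : IsZ2Grading K 𝒜)
    {B : Type u} [Ring B] [Algebra K B]
    (ℬ : ZMod 2 → Submodule K B) (hℬ : IsZ2Grading K ℬ)
    (Ξ : SuperAlg K) (ρ : B →ₐ[K] A ⊗[K] Ξ.carrier)
    (hU : IsUniversalSupermap K 𝒜 ℬ Ξ ρ)
    (F : SuperAlg K) :
    Set.BijOn
      (fun ζ : Ξ.carrier →ₐ[K] F.carrier =>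
        (Algebra.TensorProduct.map (AlgHom.id K A) ζ).comp ρ)
      {ζ : Ξ.carrier →ₐ[K] F.carrier | IsGradedHom K Ξ.grading F.grading ζ}
      {κ : B →ₐ[K] A ⊗[K] F.carrier |
        IsGradedHom K ℬ (superTensorGrading K 𝒜 F.grading) κ} := by
  obtain ⟨hρ, hmin, hlift⟩ := hU
  have hΞ : Codisjoint (Ξ.grading 0) (Ξ.grading 1) := codisjoint_iff.mpr Ξ.isGrading.1.1
  have hF : Disjoint (F.grading 0) (F.grading 1) := disjoint_iff.mpr F.isGrading.1.2
  refine ⟨fun ζ hζ ↦ ?mapsTo, fun ζ₁ h₁ ζ₂ h₂ h ↦ ?injOn, fun κ hκ ↦ ?surjOn⟩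
  case mapsTo => exact ((IsGradedHom.id 𝒜).tensorMap hζ).comp hρ
  case injOn => exact h₁.eq_of_tensorMap_comp_eq hΞ hF hmin h₂ h
  case surjOn => exact hlift F κ hκ

/-- The adjunction bijection: if `(Ξ, ρ)` is an `A`-universal supermap for
`B`, then for every supercommutative algebra `F`, the map `ζ ↦ (id_A ⊗ ζ) ∘ ρ` is a bijection
from the graded homomorphisms `Ξ → F` onto the graded homomorphisms `B → A ⊗ F`. -/
theorem universal_supermap_bijection
    {K : Type u} [Field K] [CharZero K]
    {A : Type u} [Ring A] [Algebra K A] [FiniteDimensional K A]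
    (𝒜 : ZMod 2 → Submodule K A) (h𝒜 : IsZ2Grading K 𝒜)
    {B : Type u} [Ring B] [Algebra K B]
    (ℬ : ZMod 2 → Submodule K B) (hℬ : IsZ2Grading K ℬ)
    (Ξ : SuperAlg K) (ρ : B →ₐ[K] A ⊗[K] Ξ.carrier)
    (hU : IsUniversalSupermap K 𝒜 ℬ Ξ ρ)
    (F : SuperAlg K) :
    Set.BijOn
      (fun ζ : Ξ.carrier →ₐ[K] F.carrier =>
        (Algebra.TensorProduct.map (AlgHom.id K A) ζ).comp ρ)
      {ζ : Ξ.carrier →ₐ[K] F.carrier | IsGradedHom K Ξ.grading F.grading ζ}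
      {κ : B →ₐ[K] A ⊗[K] F.carrier |
        IsGradedHom K ℬ (superTensorGrading K 𝒜 F.grading) κ} :=
  universal_supermap_bijection_general 𝒜 h𝒜 ℬ hℬ Ξ ρ hU F
end

section
/- Let K be a field of characteristic 0, A a finite-dimensional ℤ₂-graded associative unital K-algebra, B a ℤ₂-graded associative unital K-algebra, and (Ξ, ρ) an A-universal supermap for B. Then Q := ker ρ is a ℤ₂-graded two-sided ideal of B, the quotient B/Q embeds as a graded subalgebra into A⊗Ξ via the map induced by ρ, and Q is the smallest such ideal: if Q₀ is any ℤ₂-graded ideal of B such that B/Q₀ admits an injective graded homomorphism into A⊗F for some supercommutative K-algebra F, then Q ⊆ Q₀. -/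
/-!
A grading-preserving map out of `B` has a graded kernel as soon as the two components of its target
are disjoint; for `A ⊗ Ξ` this is witnessed by the projection `p₀ ⊗ q₀ + p₁ ⊗ q₁` onto the even
part. Minimality is the universal property: an embedding of `B/Q₀` into `A ⊗ F`, precomposed with
`B → B/Q₀`, factors through `ρ`, so its kernel `Q₀` contains `ker ρ`.
-/

open TensorProduct

universe u

section QuotDefs

variable (K : Type u) [Field K]

/-- The relation identifying elements modulo the two-sided ideal `I`. -/
def idealRel {B : Type u} [Ring B] [Algebra K B] (I : Submodule K B) :
    B → B → Prop :=
  fun a b => a - b ∈ I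

/-- The induced ℤ₂-grading on the quotient `B ⧸ I` (realized as `RingQuot`). -/
noncomputable def quotGrading {B : Type u} [Ring B] [Algebra K B]
    (ℬ : ZMod 2 → Submodule K B) (I : Submodule K B) :
    ZMod 2 → Submodule K (RingQuot (idealRel K I)) :=
  fun k => (ℬ k).map (RingQuot.mkAlgHom K (idealRel K I)).toLinearMap

end QuotDefs

section TensorGrading

variable {K : Type*} [Field K] {A X : Type*} [AddCommGroup A] [Module K A]
  [AddCommGroup X] [Module K X] {𝒜 : ZMod 2 → Submodule K A} {𝒳 : ZMod 2 → Submodule K X}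

theorem IsZ2Decomp.isCompl (h𝒜 : IsZ2Decomp K 𝒜) : IsCompl (𝒜 0) (𝒜 1) :=
  ⟨disjoint_iff.mpr h𝒜.2, codisjoint_iff.mpr h𝒜.1⟩

/-- The projection of `A ⊗ X` onto its even part, along its odd part. -/
noncomputable def evenProjection (h𝒜 : IsZ2Decomp K 𝒜) (h𝒳 : IsZ2Decomp K 𝒳) :
    A ⊗[K] X →ₗ[K] A ⊗[K] X :=
  TensorProduct.map ((𝒜 0).projection (𝒜 1) h𝒜.isCompl) ((𝒳 0).projection (𝒳 1) h𝒳.isCompl) +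
    TensorProduct.map ((𝒜 1).projection (𝒜 0) h𝒜.isCompl.symm)
      ((𝒳 1).projection (𝒳 0) h𝒳.isCompl.symm)

theorem evenProjection_apply_of_mem_zero (h𝒜 : IsZ2Decomp K 𝒜) (h𝒳 : IsZ2Decomp K 𝒳)
    {x : A ⊗[K] X} (hx : x ∈ superTensorGrading K 𝒜 𝒳 0) :
    evenProjection h𝒜 h𝒳 x = x := by
  suffices h : superTensorGrading K 𝒜 𝒳 0 ≤ LinearMap.ker (evenProjection h𝒜 h𝒳 - LinearMap.id)
    from sub_eq_zero.mp (h hx)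
  refine sup_le ?_ ?_ <;> refine LinearMap.range_le_ker_iff.mpr (TensorProduct.ext' fun a x ↦ ?_)
  · simp [evenProjection]
  · change 𝒳 1 at x
    simp [evenProjection]

theorem evenProjection_apply_of_mem_one (h𝒜 : IsZ2Decomp K 𝒜) (h𝒳 : IsZ2Decomp K 𝒳)
    {x : A ⊗[K] X} (hx : x ∈ superTensorGrading K 𝒜 𝒳 1) :
    evenProjection h𝒜 h𝒳 x = 0 := by
  suffices h : superTensorGrading K 𝒜 𝒳 1 ≤ LinearMap.ker (evenProjection h𝒜 h𝒳) from h hx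
  refine sup_le ?_ ?_ <;> refine LinearMap.range_le_ker_iff.mpr (TensorProduct.ext' fun a x ↦ ?_)
  · simp [evenProjection]
  · change 𝒳 0 at x
    simp [evenProjection]

theorem disjoint_superTensorGrading (h𝒜 : IsZ2Decomp K 𝒜) (h𝒳 : IsZ2Decomp K 𝒳) :
    Disjoint (superTensorGrading K 𝒜 𝒳 0) (superTensorGrading K 𝒜 𝒳 1) :=
  Submodule.disjoint_def.mpr fun _ h₀ h₁ ↦
    (evenProjection_apply_of_mem_zero h𝒜 h𝒳 h₀).symm.trans
      (evenProjection_apply_of_mem_one h𝒜 h𝒳 h₁)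

end TensorGrading

section Kernel

variable {K : Type*} [Field K] {B C : Type*} [Ring B] [Algebra K B] [Ring C] [Algebra K C]

theorem isTwoSidedSubmodule_ker (f : B →ₐ[K] C) :
    IsTwoSidedSubmodule K (LinearMap.ker f.toLinearMap) := by
  intro a x hx
  have hx : f x = 0 := hx
  constructor <;> simp [hx]

theorem IsGradedHom.isGradedSubmodule_ker {ℬ : ZMod 2 → Submodule K B}
    {𝒞 : ZMod 2 → Submodule K C} {f : B →ₐ[K] C} (hf : IsGradedHom K ℬ 𝒞 f)
    (hℬ : ℬ 0 ⊔ ℬ 1 = ⊤) (h𝒞 : Disjoint (𝒞 0) (𝒞 1)) :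
    IsGradedSubmodule K ℬ (LinearMap.ker f.toLinearMap) := by
  refine le_antisymm (fun x hx ↦ ?_) (sup_le inf_le_left inf_le_left)
  obtain ⟨b₀, hb₀, b₁, hb₁, rfl⟩ := Submodule.mem_sup.mp (hℬ ▸ Submodule.mem_top : x ∈ ℬ 0 ⊔ ℬ 1)
  have hsum : f b₀ + f b₁ = 0 := by rwa [← map_add]
  have hf₀ : f b₀ = 0 := by
    refine Submodule.disjoint_def.mp h𝒞 _ (hf 0 b₀ hb₀) ?_
    rw [eq_neg_of_add_eq_zero_left hsum]
    exact neg_mem (hf 1 b₁ hb₁)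
  have hf₁ : f b₁ = 0 := by rwa [hf₀, zero_add] at hsum
  exact Submodule.add_mem_sup ⟨hf₀, hb₀⟩ ⟨hf₁, hb₁⟩

end Kernel

section Quotient

variable {K : Type u} [Field K] {B : Type u} [Ring B] [Algebra K B]

/-- A two-sided ideal given as a `K`-subspace, as a bundled `TwoSidedIdeal`. -/
def IsTwoSidedSubmodule.toTwoSidedIdeal {I : Submodule K B} (hI : IsTwoSidedSubmodule K I) :
    TwoSidedIdeal B :=
  .mk' I I.zero_mem I.add_mem I.neg_mem (fun h ↦ (hI _ _ h).1) (fun h ↦ (hI _ _ h).2)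

theorem IsTwoSidedSubmodule.ringCon_toTwoSidedIdeal_iff {I : Submodule K B}
    (hI : IsTwoSidedSubmodule K I) {a b : B} :
    hI.toTwoSidedIdeal.ringCon a b ↔ a - b ∈ I :=
  (TwoSidedIdeal.rel_iff _ a b).trans (TwoSidedIdeal.mem_mk' ..)

theorem IsTwoSidedSubmodule.ker_mkAlgHom {I : Submodule K B} (hI : IsTwoSidedSubmodule K I) :
    LinearMap.ker (RingQuot.mkAlgHom K (idealRel K I)).toLinearMap = I := by
  refine le_antisymm (fun x hx ↦ ?_) (fun x hx ↦ ?_)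
  · let π : B →ₐ[K] hI.toTwoSidedIdeal.ringCon.Quotient := hI.toTwoSidedIdeal.ringCon.mkₐ K
    have hπ : ∀ ⦃a b⦄, idealRel K I a b → π a = π b := fun a b hab ↦
      (RingCon.eq _).mpr (hI.ringCon_toTwoSidedIdeal_iff.mpr hab)
    have hx : RingQuot.mkAlgHom K (idealRel K I) x = 0 := hx
    have hπx : π x = π 0 := by
      rw [← RingQuot.liftAlgHom_mkAlgHom_apply K π hπ, hx, map_zero, map_zero]
    simpa only [sub_zero] using hI.ringCon_toTwoSidedIdeal_iff.mp ((RingCon.eq _).mp hπx)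
  · have hrel : idealRel K I x 0 := by rwa [idealRel, sub_zero]
    exact (RingQuot.mkAlgHom_rel K hrel).trans (map_zero _)

variable {C : Type*} [Ring C] [Algebra K C]

/-- The map `B/ker f → C` induced by `f : B → C`. -/
noncomputable def ringQuotKerLift (f : B →ₐ[K] C) :
    RingQuot (idealRel K (LinearMap.ker f.toLinearMap)) →ₐ[K] C :=
  RingQuot.liftAlgHom K ⟨f, fun _ _ h ↦ LinearMap.sub_mem_ker_iff.mp h⟩

theorem ringQuotKerLift_comp_mkAlgHom (f : B →ₐ[K] C) :
    (ringQuotKerLift f).comp (RingQuot.mkAlgHom K _) = f :=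
  AlgHom.ext <| RingQuot.liftAlgHom_mkAlgHom_apply K f _

theorem ringQuotKerLift_injective (f : B →ₐ[K] C) : Function.Injective (ringQuotKerLift f) := by
  refine (injective_iff_map_eq_zero _).mpr fun q hq ↦ ?_
  obtain ⟨b, rfl⟩ := RingQuot.mkAlgHom_surjective K _ q
  have hb : b ∈ LinearMap.ker f.toLinearMap :=
    (DFunLike.congr_fun (ringQuotKerLift_comp_mkAlgHom f) b).symm.trans hq
  rwa [← (isTwoSidedSubmodule_ker f).ker_mkAlgHom] at hb

theorem isGradedHom_quotGrading_iff {ℬ : ZMod 2 → Submodule K B} {𝒞 : ZMod 2 → Submodule K C}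
    {I : Submodule K B} {g : RingQuot (idealRel K I) →ₐ[K] C} :
    IsGradedHom K (quotGrading K ℬ I) 𝒞 g ↔
      IsGradedHom K ℬ 𝒞 (g.comp (RingQuot.mkAlgHom K (idealRel K I))) := by
  refine forall_congr' fun k ↦ ⟨fun hg b hb ↦ hg _ ⟨b, hb, rfl⟩, ?_⟩
  rintro hg _ ⟨b, hb, rfl⟩
  exact hg b hb

theorem IsTwoSidedSubmodule.ker_comp_mkAlgHom {I : Submodule K B} (hI : IsTwoSidedSubmodule K I)
    {g : RingQuot (idealRel K I) →ₐ[K] C} (hg : Function.Injective g) :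
    LinearMap.ker (g.comp (RingQuot.mkAlgHom K (idealRel K I))).toLinearMap = I :=
  (LinearMap.ker_comp_of_ker_eq_bot (g := g.toLinearMap) _ (LinearMap.ker_eq_bot.mpr hg)).trans
    hI.ker_mkAlgHom

end Quotient

theorem kernel_of_universal_supermap_minimal_general
    {K : Type u} [Field K]
    {A : Type*} [Ring A] [Algebra K A]
    {𝒜 : ZMod 2 → Submodule K A} (h𝒜 : IsZ2Decomp K 𝒜)
    {B : Type u} [Ring B] [Algebra K B]
    {ℬ : ZMod 2 → Submodule K B} (hℬ : ℬ 0 ⊔ ℬ 1 = ⊤)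
    {X : Type*} [Ring X] [Algebra K X]
    {𝒳 : ZMod 2 → Submodule K X} (h𝒳 : IsZ2Decomp K 𝒳)
    {ρ : B →ₐ[K] A ⊗[K] X} (hρ : IsGradedHom K ℬ (superTensorGrading K 𝒜 𝒳) ρ)
    (hfactor : ∀ (F : SuperAlg K) (κ : B →ₐ[K] A ⊗[K] F.carrier),
      IsGradedHom K ℬ (superTensorGrading K 𝒜 F.grading) κ →
      ∃ ζ : X →ₐ[K] F.carrier, (Algebra.TensorProduct.map (AlgHom.id K A) ζ).comp ρ = κ) :
    IsTwoSidedSubmodule K (LinearMap.ker ρ.toLinearMap) ∧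
    IsGradedSubmodule K ℬ (LinearMap.ker ρ.toLinearMap) ∧
    (∃ ρbar : RingQuot (idealRel K (LinearMap.ker ρ.toLinearMap)) →ₐ[K] A ⊗[K] X,
      ρbar.comp (RingQuot.mkAlgHom K (idealRel K (LinearMap.ker ρ.toLinearMap))) = ρ ∧
      Function.Injective ρbar ∧
      IsGradedHom K (quotGrading K ℬ (LinearMap.ker ρ.toLinearMap))
        (superTensorGrading K 𝒜 𝒳) ρbar) ∧
    ∀ Q₀ : Submodule K B, IsTwoSidedSubmodule K Q₀ →
      (∃ (F : SuperAlg K) (κ : RingQuot (idealRel K Q₀) →ₐ[K] A ⊗[K] F.carrier),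
        Function.Injective κ ∧
        IsGradedHom K (quotGrading K ℬ Q₀) (superTensorGrading K 𝒜 F.grading) κ) →
      LinearMap.ker ρ.toLinearMap ≤ Q₀ := by
  refine ⟨isTwoSidedSubmodule_ker ρ,
    hρ.isGradedSubmodule_ker hℬ (disjoint_superTensorGrading h𝒜 h𝒳),
    ⟨ringQuotKerLift ρ, ringQuotKerLift_comp_mkAlgHom ρ, ringQuotKerLift_injective ρ, ?_⟩, ?_⟩
  · rwa [isGradedHom_quotGrading_iff, ringQuotKerLift_comp_mkAlgHom]
  · rintro Q₀ hQ₀ ⟨F, κ, hκ_inj, hκ⟩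
    obtain ⟨ζ, hζ⟩ := hfactor F _ (isGradedHom_quotGrading_iff.mp hκ)
    rw [← hQ₀.ker_comp_mkAlgHom hκ_inj, ← hζ]
    exact LinearMap.ker_le_ker_comp ρ.toLinearMap
      (Algebra.TensorProduct.map (AlgHom.id K A) ζ).toLinearMap

/-- If `(Ξ, ρ)` is an `A`-universal supermap for `B`, then `Q = ker ρ` is a
graded two-sided ideal of `B`, the quotient `B/Q` embeds into `A ⊗ Ξ` as a graded subalgebra
via the map induced by `ρ`, and `Q` is the smallest ideal with this property: any graded
ideal `Q₀` such that `B/Q₀` embeds (by a graded monomorphism) into some `A ⊗ F` contains `Q`. -/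
theorem kernel_of_universal_supermap_minimal
    {K : Type u} [Field K] [CharZero K]
    {A : Type u} [Ring A] [Algebra K A] [FiniteDimensional K A]
    (𝒜 : ZMod 2 → Submodule K A) (h𝒜 : IsZ2Grading K 𝒜)
    {B : Type u} [Ring B] [Algebra K B]
    (ℬ : ZMod 2 → Submodule K B) (hℬ : IsZ2Grading K ℬ)
    (Ξ : SuperAlg K) (ρ : B →ₐ[K] A ⊗[K] Ξ.carrier)
    (hU : IsUniversalSupermap K 𝒜 ℬ Ξ ρ) :
    IsTwoSidedSubmodule K (LinearMap.ker ρ.toLinearMap) ∧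
    IsGradedSubmodule K ℬ (LinearMap.ker ρ.toLinearMap) ∧
    (∃ ρbar : RingQuot (idealRel K (LinearMap.ker ρ.toLinearMap)) →ₐ[K] A ⊗[K] Ξ.carrier,
      ρbar.comp (RingQuot.mkAlgHom K (idealRel K (LinearMap.ker ρ.toLinearMap))) = ρ ∧
      Function.Injective ρbar ∧
      IsGradedHom K (quotGrading K ℬ (LinearMap.ker ρ.toLinearMap))
        (superTensorGrading K 𝒜 Ξ.grading) ρbar) ∧
    ∀ Q₀ : Submodule K B, IsTwoSidedSubmodule K Q₀ → IsGradedSubmodule K ℬ Q₀ →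
      (∃ (F : SuperAlg K) (κ : RingQuot (idealRel K Q₀) →ₐ[K] A ⊗[K] F.carrier),
        Function.Injective κ ∧
        IsGradedHom K (quotGrading K ℬ Q₀) (superTensorGrading K 𝒜 F.grading) κ) →
      LinearMap.ker ρ.toLinearMap ≤ Q₀ := by
  obtain ⟨htwo, hgr, hembed, hmin⟩ := kernel_of_universal_supermap_minimal_general h𝒜.1 hℬ.1.1
    Ξ.isGrading.1 hU.1 fun F κ hκ ↦ (hU.2.2 F κ hκ).imp fun _ ↦ And.right
  exact ⟨htwo, hgr, hembed, fun Q₀ hQ₀ _ ↦ hmin Q₀ hQ₀⟩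
end

section
/- Let K be a field of characteristic 0, A a finite-dimensional ℤ₂-graded associative unital K-algebra, B a ℤ₂-graded associative unital K-algebra, and let ρ: B → A⊗Ξ be a graded homomorphism into A tensored with a supercommutative K-algebra Ξ such that the only graded unital K-subalgebra Ξ' of Ξ with ρ(B) ⊆ A⊗Ξ' is Ξ' = Ξ. If B is finitely generated as a K-algebra, then Ξ is finitely generated as a K-algebra. -/
open TensorProduct

universe u

/-!
Expand the images under `ρ` of finitely many generators of `B` as tensors, and split their right
factors into homogeneous components: this produces a finite set `t` of homogeneous elements of `Ξ`.
Since `A ⊗ adjoin t` is a subalgebra of `A ⊗ Ξ` containing the images of the generators, it contains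
`ρ(B)`. Being generated by homogeneous elements, `adjoin t` is graded, so `adjoin t = Ξ` by the
minimality of `Ξ`.
-/

section TensorSpan

variable {R M N : Type*} [CommSemiring R] [AddCommMonoid M] [Module R M]
  [AddCommMonoid N] [Module R N]

theorem range_lTensor_subtype_mono {P Q : Submodule R N} (hPQ : P ≤ Q) :
    LinearMap.range (P.subtype.lTensor M) ≤ LinearMap.range (Q.subtype.lTensor M) := by
  rw [← Submodule.subtype_comp_inclusion P Q hPQ, LinearMap.lTensor_comp]
  exact LinearMap.range_comp_le_range _ _

theorem exists_finset_subset_range_lTensor_span {H : Set N} (hH : Submodule.span R H = ⊤)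
    {s : Set (M ⊗[R] N)} (hs : s.Finite) :
    ∃ t : Finset N, ↑t ⊆ H ∧
      s ⊆ LinearMap.range ((Submodule.span R (t : Set N)).subtype.lTensor M) := by
  obtain ⟨P, hP, hsP⟩ := TensorProduct.exists_finite_submodule_right_of_setFinite s hs
  obtain ⟨p, rfl⟩ : P.FG := Module.Finite.iff_fg.1 hP
  obtain ⟨t, htH, hpt⟩ := Submodule.subset_span_finite_of_subset_span (R := R) (s := H) (t := p)
    (by simp [hH])
  exact ⟨t, htH, hsP.trans (range_lTensor_subtype_mono (Submodule.span_le.2 hpt))⟩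

end TensorSpan

section TensorSubalgebra

variable {R A B X : Type*} [CommSemiring R] [Semiring A] [Algebra R A] [Semiring B] [Algebra R B]
  [Semiring X] [Algebra R X]

theorem toSubmodule_range_map_id_val (S : Subalgebra R X) :
    Subalgebra.toSubmodule (Algebra.TensorProduct.map (AlgHom.id R A) S.val).range =
      LinearMap.range ((Subalgebra.toSubmodule S).subtype.lTensor A) :=
  rfl

theorem exists_finset_range_le_range_map_adjoin_val [Algebra.FiniteType R B]
    (ρ : B →ₐ[R] A ⊗[R] X) {H : Set X} (hH : Submodule.span R H = ⊤) :
    ∃ t : Finset X, ↑t ⊆ H ∧ ρ.range ≤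
      (Algebra.TensorProduct.map (AlgHom.id R A) (Algebra.adjoin R (t : Set X)).val).range := by
  obtain ⟨s, hs⟩ := Algebra.FiniteType.out (R := R) (A := B)
  obtain ⟨t, htH, hst⟩ :=
    exists_finset_subset_range_lTensor_span hH (s.finite_toSet.image ρ)
  refine ⟨t, htH, ?_⟩
  rw [← Algebra.map_top, ← hs, AlgHom.map_adjoin, Algebra.adjoin_le_iff,
    ← Subalgebra.coe_toSubmodule, toSubmodule_range_map_id_val]
  exact hst.trans (range_lTensor_subtype_mono (Algebra.span_le_adjoin R _))

end TensorSubalgebra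

theorem span_isHomogeneousElem_eq_iSup {ι R M : Type*} [Semiring R] [AddCommMonoid M] [Module R M]
    (ℳ : ι → Submodule R M) :
    Submodule.span R {x | SetLike.IsHomogeneousElem ℳ x} = ⨆ i, ℳ i := by
  rw [Submodule.iSup_eq_span]
  congr 1
  ext x
  simp [SetLike.IsHomogeneousElem]

section GradedFamily

variable {ι R X : Type*} [AddMonoid ι] [CommSemiring R] [Semiring X] [Algebra R X]
  (𝒳 : ι → Submodule R X)

theorem gradedMonoid_toSubmodule_inf [SetLike.GradedMonoid 𝒳] (S : Subalgebra R X) :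
    SetLike.GradedMonoid fun i ↦ Subalgebra.toSubmodule S ⊓ 𝒳 i where
  one_mem := ⟨S.one_mem, SetLike.one_mem_graded 𝒳⟩
  mul_mem _ _ _ _ hx hy := ⟨S.mul_mem hx.1 hy.1, SetLike.mul_mem_graded hx.2 hy.2⟩

theorem toSubmodule_adjoin_eq_iSup_inf [SetLike.GradedMonoid 𝒳] {t : Set X}
    (ht : t ⊆ {x | SetLike.IsHomogeneousElem 𝒳 x}) :
    Subalgebra.toSubmodule (Algebra.adjoin R t) =
      ⨆ i, Subalgebra.toSubmodule (Algebra.adjoin R t) ⊓ 𝒳 i := by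
  classical
  refine le_antisymm ?_ (iSup_le fun _ ↦ inf_le_left)
  have := gradedMonoid_toSubmodule_inf 𝒳 (Algebra.adjoin R t)
  -- The right-hand side is itself a subalgebra, so only the elements of `t` need checking.
  rw [Submodule.iSup_eq_toSubmodule_range, OrderEmbedding.le_iff_le, Algebra.adjoin_le_iff]
  intro x hx
  obtain ⟨i, hi⟩ := ht hx
  exact ⟨DirectSum.of _ i ⟨x, Algebra.subset_adjoin hx, hi⟩, DirectSum.coeAlgHom_of _ _ _⟩

end GradedFamily

theorem iSup_zmod_two {L : Type*} [CompleteLattice L] (f : ZMod 2 → L) :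
    ⨆ i, f i = f 0 ⊔ f 1 :=
  le_antisymm (iSup_le fun i ↦ by fin_cases i; exacts [le_sup_left, le_sup_right])
    (sup_le (le_iSup f 0) (le_iSup f 1))

section Z2Grading

variable {K X : Type*} [Field K] [Ring X] [Algebra K X] {𝒳 : ZMod 2 → Submodule K X}

theorem IsZ2Grading.gradedMonoid (h𝒳 : IsZ2Grading K 𝒳) : SetLike.GradedMonoid 𝒳 where
  one_mem := h𝒳.2.1
  mul_mem i j x y hx hy := h𝒳.2.2 i j x hx y hy

theorem IsZ2Grading.iSup_eq_top (h𝒳 : IsZ2Grading K 𝒳) : ⨆ i, 𝒳 i = ⊤ :=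
  (iSup_zmod_two 𝒳).trans h𝒳.1.1

theorem isGradedSubalgebra_iff_eq_iSup_inf {S : Subalgebra K X} :
    IsGradedSubalgebra K 𝒳 S ↔
      Subalgebra.toSubmodule S = ⨆ i, Subalgebra.toSubmodule S ⊓ 𝒳 i := by
  rw [iSup_zmod_two, IsGradedSubalgebra, IsGradedSubmodule]

end Z2Grading

theorem mapsIntoTensorSub_iff_range_le {K A B X : Type u} [Field K] [Ring A] [Algebra K A]
    [Ring B] [Algebra K B] [Ring X] [Algebra K X] {ρ : B →ₐ[K] A ⊗[K] X} {S : Subalgebra K X} :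
    MapsIntoTensorSub K ρ S ↔
      ρ.range ≤ (Algebra.TensorProduct.map (AlgHom.id K A) S.val).range :=
  Set.range_subset_iff.symm

theorem universal_supermap_finitely_generated_general {ι R A B X : Type*} [AddMonoid ι]
    [CommSemiring R] [Semiring A] [Algebra R A] [Semiring B] [Algebra R B] [Algebra.FiniteType R B]
    [Semiring X] [Algebra R X] (𝒳 : ι → Submodule R X) [SetLike.GradedMonoid 𝒳]
    (h𝒳 : ⨆ i, 𝒳 i = ⊤) (ρ : B →ₐ[R] A ⊗[R] X)
    (hgen : ∀ S : Subalgebra R X,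
      Subalgebra.toSubmodule S = ⨆ i, Subalgebra.toSubmodule S ⊓ 𝒳 i →
      ρ.range ≤ (Algebra.TensorProduct.map (AlgHom.id R A) S.val).range → S = ⊤) :
    Algebra.FiniteType R X := by
  obtain ⟨t, ht, hρt⟩ := exists_finset_range_le_range_map_adjoin_val ρ
    ((span_isHomogeneousElem_eq_iSup 𝒳).trans h𝒳)
  exact ⟨t, hgen _ (toSubmodule_adjoin_eq_iSup_inf 𝒳 ht) hρt⟩

/-- If the entries of `ρ(B)` generate `Ξ` (i.e. the only graded subalgebra
`Ξ'` of `Ξ` with `ρ(B) ⊆ A ⊗ Ξ'` is `Ξ` itself) and `B` is finitely generated as a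
`K`-algebra, then `Ξ` is finitely generated as a `K`-algebra. -/
theorem universal_supermap_finitely_generated
    {K : Type u} [Field K] [CharZero K]
    {A : Type u} [Ring A] [Algebra K A] [FiniteDimensional K A]
    (𝒜 : ZMod 2 → Submodule K A) (h𝒜 : IsZ2Grading K 𝒜)
    {B : Type u} [Ring B] [Algebra K B]
    (ℬ : ZMod 2 → Submodule K B) (hℬ : IsZ2Grading K ℬ)
    (Ξ : SuperAlg K) (ρ : B →ₐ[K] A ⊗[K] Ξ.carrier)
    (hρ : IsGradedHom K ℬ (superTensorGrading K 𝒜 Ξ.grading) ρ)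
    (hgen : ∀ S : Subalgebra K Ξ.carrier, IsGradedSubalgebra K Ξ.grading S →
      MapsIntoTensorSub K ρ S → S = ⊤)
    (hB : ∃ s : Finset B, Algebra.adjoin K (s : Set B) = ⊤) :
    ∃ t : Finset Ξ.carrier, Algebra.adjoin K (t : Set Ξ.carrier) = ⊤ := by
  have := Ξ.isGrading.gradedMonoid
  have : Algebra.FiniteType K B := ⟨hB⟩
  exact (universal_supermap_finitely_generated_general Ξ.grading Ξ.isGrading.iSup_eq_top ρ
    fun S hS hρS ↦ hgen S (isGradedSubalgebra_iff_eq_iSup_inf.2 hS)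
      (mapsIntoTensorSub_iff_range_le.2 hρS)).out
end
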